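/- There exists exactly one function f : ℕ → Stream' ℕ satisfying the mixed recursive–corecursive equation f n = (if n > 0 then (f (n − 1)) ⊕ (SCons 0 (f (n + 1))) else SCons 1 (f 1)) for all n, where ⊕ is pointwise addition of streams; moreover f 1 is the stream of Catalan numbers C₁, C₂, C₃, …: (f 1).get i = catalan (i + 1) for all i. -/

import Mathlib

open Stream'

/-- Pointwise addition of streams. -/
def sadd (xs ys : Stream' ℕ) : Stream' ℕ := fun n => xs.get n + ys.get n

infixl:65 " ⊕ " => sadd

/-!
Identify a stream with its generating function. If `C = 1 + X C²` is the Catalan series, then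
multiplying by `Cⁿ⁺¹` gives `Cⁿ⁺² = Cⁿ⁺¹ + X Cⁿ⁺³`, so the streams of coefficients of `Cⁿ⁺¹` solve
the equation. Conversely, the equation determines `(f n).get i` by lexicographic recursion on
`(i, n)`, because the occurrence of `f (n + 1)` is guarded by a constructor and that of `f (n - 1)`
decreases `n`.
-/

section CoeffStream

open PowerSeries

variable {R : Type*} [Semiring R]

/-- The stream of coefficients of a formal power series, which transports identities between
generating functions to identities between streams. -/
noncomputable def coeffStream (φ : R⟦X⟧) : Stream' R := fun i => coeff i φ

theorem get_coeffStream (φ : R⟦X⟧) (i : ℕ) : (coeffStream φ).get i = coeff i φ := rfl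

theorem coeffStream_mul_X_add_C (φ : R⟦X⟧) (a : R) :
    coeffStream (φ * X + C a) = Stream'.cons a (coeffStream φ) := by
  refine Stream'.ext fun i => ?_
  cases i with
  | zero => simp [get_coeffStream]
  | succ i => simp [get_coeffStream, Stream'.get_succ_cons, coeff_succ_mul_X]

theorem coeffStream_mul_X (φ : R⟦X⟧) :
    coeffStream (φ * X) = Stream'.cons 0 (coeffStream φ) := by
  simpa only [map_zero, add_zero] using coeffStream_mul_X_add_C φ 0

theorem coeffStream_mul_X_add_one (φ : R⟦X⟧) :
    coeffStream (φ * X + 1) = Stream'.cons 1 (coeffStream φ) := by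
  simpa only [map_one] using coeffStream_mul_X_add_C φ 1

theorem coeffStream_add (φ ψ : ℕ⟦X⟧) :
    coeffStream (φ + ψ) = coeffStream φ ⊕ coeffStream ψ :=
  Stream'.ext fun i => map_add (coeff i) φ ψ

end CoeffStream

/-- The families of streams solving the mixed recursive–corecursive equation, with its two branches
as separate fields; the index of the second is shifted to avoid truncated subtraction. -/
structure IsCatalanFamily (f : ℕ → Stream' ℕ) : Prop where
  zero : f 0 = Stream'.cons 1 (f 1)
  succ (n : ℕ) : f (n + 1) = f n ⊕ Stream'.cons 0 (f (n + 2))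

theorem isCatalanFamily_iff {f : ℕ → Stream' ℕ} :
    IsCatalanFamily f ↔ ∀ n, f n =
      if n > 0 then (f (n - 1)) ⊕ (Stream'.cons 0 (f (n + 1)))
      else Stream'.cons 1 (f 1) :=
  ⟨fun hf n => match n with
    | 0 => hf.zero
    | n + 1 => hf.succ n,
  fun hf => ⟨hf 0, fun n => hf (n + 1)⟩⟩

namespace IsCatalanFamily

variable {f g : ℕ → Stream' ℕ}

theorem get_zero_succ (hf : IsCatalanFamily f) (i : ℕ) : (f 0).get (i + 1) = (f 1).get i := by
  rw [hf.zero, Stream'.get_succ_cons]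

theorem get_succ_zero (hf : IsCatalanFamily f) (n : ℕ) : (f (n + 1)).get 0 = (f n).get 0 := by
  rw [hf.succ]
  rfl

theorem get_succ_succ (hf : IsCatalanFamily f) (n i : ℕ) :
    (f (n + 1)).get (i + 1) = (f n).get (i + 1) + (f (n + 2)).get i := by
  rw [hf.succ]
  rfl

theorem get_zero (hf : IsCatalanFamily f) (n : ℕ) : (f n).get 0 = 1 := by
  induction n with
  | zero => rw [hf.zero, Stream'.get_zero_cons]
  | succ n ih => rw [hf.get_succ_zero, ih]

theorem unique (hf : IsCatalanFamily f) (hg : IsCatalanFamily g) : f = g := by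
  suffices get_eq : ∀ i n, (f n).get i = (g n).get i from
    funext fun n => Stream'.ext fun i => get_eq i n
  intro i
  induction i with
  | zero => exact fun n => (hf.get_zero n).trans (hg.get_zero n).symm
  | succ i ih_index =>
    intro n
    induction n with
    | zero => rw [hf.get_zero_succ, hg.get_zero_succ, ih_index]
    | succ n ih_family => rw [hf.get_succ_succ, hg.get_succ_succ, ih_family, ih_index]

end IsCatalanFamily

section CatalanSeries

open PowerSeries

theorem catalanSeries_pow_succ (n : ℕ) :
    catalanSeries ^ (n + 1) = catalanSeries ^ n + catalanSeries ^ (n + 2) * X :=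
  calc
    catalanSeries ^ (n + 1) = catalanSeries ^ n * (catalanSeries ^ 2 * X + 1) := by
      rw [catalanSeries_sq_mul_X_add_one, pow_succ]
    _ = catalanSeries ^ n + catalanSeries ^ (n + 2) * X := by ring

theorem isCatalanFamily_coeffStream_catalanSeries_pow :
    IsCatalanFamily fun n => coeffStream (catalanSeries ^ (n + 1)) where
  zero := by
    rw [← coeffStream_mul_X_add_one, zero_add, pow_one, one_add_one_eq_two,
      catalanSeries_sq_mul_X_add_one]
  succ n := by
    rw [catalanSeries_pow_succ (n + 1), coeffStream_add, coeffStream_mul_X]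

theorem IsCatalanFamily.get_one {f : ℕ → Stream' ℕ} (hf : IsCatalanFamily f) (i : ℕ) :
    (f 1).get i = catalan (i + 1) := by
  rw [← hf.get_zero_succ, hf.unique isCatalanFamily_coeffStream_catalanSeries_pow,
    get_coeffStream, zero_add, pow_one, catalanSeries_coeff]

end CatalanSeries

theorem stmt_16 :
    (∃! f : ℕ → Stream' ℕ,
      ∀ n, f n =
        if n > 0 then (f (n - 1)) ⊕ (Stream'.cons 0 (f (n + 1)))
        else Stream'.cons 1 (f 1)) ∧
    (∀ f : ℕ → Stream' ℕ,
      (∀ n, f n =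
        if n > 0 then (f (n - 1)) ⊕ (Stream'.cons 0 (f (n + 1)))
        else Stream'.cons 1 (f 1)) →
      ∀ i, (f 1).get i = catalan (i + 1)) := by
  simp only [← isCatalanFamily_iff]
  exact ⟨⟨_, isCatalanFamily_coeffStream_catalanSeries_pow,
    fun _ hf => hf.unique isCatalanFamily_coeffStream_catalanSeries_pow⟩,
    fun _ hf => hf.get_one⟩
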